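/- arXiv:2001.00303 — 5 statements merged into one kernel-verified Lean document; each statement's English description precedes it below -/
import Mathlib

section
/- Suppose that for every feasible pinning (A,B) with |A|+|B| ≤ n−2 and every i ∉ A ∪ B one has 0 < Pr_{μ_{A,B}}[i ∈ S] < 1, and suppose μ is (η_0,…,η_{n−2})-spectrally independent. Then for every feasible pinning (A,B) with |A|+|B| = k ≤ n−2, the walk matrix P_{A,B} — indexed by pairs (i,s) with i ∉ A∪B and s ∈ {in,out}, with entries P_{A,B}((i,s),(j,t)) = (1/(n−k−1))·Pr_{μ_{A,B}}[j has state t | i has state s] for i ≠ j and P_{A,B}((i,s),(i,t)) = 0 — satisfies: every real eigenvalue t of P_{A,B} with t ≠ 1 obeys t ≤ η_k/(n−k−1). -/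
open scoped Classical
open Finset

noncomputable section

namespace PaperStmt

variable {n : ℕ}

/-- Probability of an event under `μ`. -/
def prE (μ : Finset (Fin n) → ℝ) (E : Finset (Fin n) → Prop) : ℝ :=
  ∑ S : Finset (Fin n), if E S then μ S else 0

/-- Conditional probability `Pr[E | F]` under `μ`. -/
def condPrE (μ : Finset (Fin n) → ℝ) (E F : Finset (Fin n) → Prop) : ℝ :=
  prE μ (fun S => E S ∧ F S) / prE μ F

/-- The distribution `μ` conditioned on the pinning `(A, B)`. -/
def pin (μ : Finset (Fin n) → ℝ) (A B : Finset (Fin n)) : Finset (Fin n) → ℝ :=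
  fun S => if A ⊆ S ∧ Disjoint B S then
    μ S / prE μ (fun S' => A ⊆ S' ∧ Disjoint B S') else 0

/-- Feasibility of the pinning `(A, B)`. -/
def Feasible (μ : Finset (Fin n) → ℝ) (A B : Finset (Fin n)) : Prop :=
  0 < prE μ (fun S => A ⊆ S ∧ Disjoint B S)

/-- The pinned pairwise influence matrix `Ψ_{A,B}`. -/
def pinnedPsi (μ : Finset (Fin n) → ℝ) (A B : Finset (Fin n)) :
    Matrix (Fin n) (Fin n) ℝ :=
  fun i j =>
    if i ≠ j ∧ i ∉ A ∪ B ∧ j ∉ A ∪ B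
        ∧ 0 < prE (pin μ A B) (fun S => i ∈ S)
        ∧ 0 < prE (pin μ A B) (fun S => i ∉ S) then
      condPrE (pin μ A B) (fun S => j ∈ S) (fun S => i ∈ S)
        - condPrE (pin μ A B) (fun S => j ∈ S) (fun S => i ∉ S)
    else 0

/-- `t` is a real eigenvalue of the real matrix `M`. -/
def IsRealEigenvalue {ι : Type*} [Fintype ι] (M : Matrix ι ι ℝ) (t : ℝ) : Prop :=
  ∃ v : ι → ℝ, v ≠ 0 ∧ M.mulVec v = t • v

/-- `μ` is `(η 0, …, η (n-2))`-spectrally independent. -/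
def SpectrallyIndependent (μ : Finset (Fin n) → ℝ) (η : ℕ → ℝ) : Prop :=
  ∀ A B : Finset (Fin n), Disjoint A B → Feasible μ A B →
    A.card + B.card ≤ n - 2 →
    ∀ t : ℝ, IsRealEigenvalue (pinnedPsi μ A B) t → t ≤ η (A.card + B.card)

/-- The event "`i` has state `s`" (`true` = in, `false` = out). -/
def stateEvent (i : Fin n) (s : Bool) : Finset (Fin n) → Prop :=
  fun S => if s then i ∈ S else i ∉ S

/-- The walk matrix `P_{A,B}`, indexed by pairs `(i, s)` with `i ∉ A ∪ B`
and `s ∈ {in, out}`. -/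
def pinnedWalk (μ : Finset (Fin n) → ℝ) (A B : Finset (Fin n)) :
    Matrix ({i : Fin n // i ∉ A ∪ B} × Bool) ({i : Fin n // i ∉ A ∪ B} × Bool) ℝ :=
  fun p q =>
    if p.1 = q.1 then 0
    else (1 / ((n : ℝ) - (A.card + B.card) - 1)) *
      condPrE (pin μ A B) (stateEvent q.1.1 q.2) (stateEvent p.1.1 p.2)

theorem prE_and_add_prE_not_and (ν : Finset (Fin n) → ℝ) (E F : Finset (Fin n) → Prop) :
    prE ν (fun S => E S ∧ F S) + prE ν (fun S => ¬ E S ∧ F S) = prE ν F := by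
  unfold prE
  rw [← Finset.sum_add_distrib]
  refine Finset.sum_congr rfl fun S _ => ?_
  by_cases hE : E S <;> by_cases hF : F S <;> simp [hE, hF]

theorem prE_add_prE_not (ν : Finset (Fin n) → ℝ) (E : Finset (Fin n) → Prop) :
    prE ν E + prE ν (fun S => ¬ E S) = ∑ S, ν S := by
  unfold prE
  rw [← Finset.sum_add_distrib]
  refine Finset.sum_congr rfl fun S _ => ?_
  by_cases hE : E S <;> simp [hE]

theorem sum_pin_eq_one {μ : Finset (Fin n) → ℝ} {A B : Finset (Fin n)}
    (hf : Feasible μ A B) : ∑ S, pin μ A B S = 1 := by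
  have h : ∑ S, pin μ A B S = prE μ (fun S => A ⊆ S ∧ Disjoint B S) /
      prE μ (fun S => A ⊆ S ∧ Disjoint B S) := by
    conv_rhs => enter [1]; unfold prE
    rw [Finset.sum_div]
    refine Finset.sum_congr rfl fun S _ => ?_
    unfold pin
    split_ifs <;> simp
  rw [h, div_self hf.ne']

theorem condPrE_not {ν : Finset (Fin n) → ℝ} {E F : Finset (Fin n) → Prop}
    (hF : 0 < prE ν F) :
    condPrE ν (fun S => ¬ E S) F = 1 - condPrE ν E F := by
  have h := prE_and_add_prE_not_and ν E F
  unfold condPrE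
  rw [eq_sub_iff_add_eq, ← add_div, add_comm, h, div_self hF.ne']

theorem stateEvent_true (i : Fin n) : stateEvent i true = fun S => i ∈ S := by
  funext S
  simp [stateEvent]

theorem stateEvent_false (i : Fin n) : stateEvent i false = fun S => i ∉ S := by
  funext S
  simp [stateEvent]

/-- A row of the walk matrix applied to `v`, in terms of the differences
`v (j, true) - v (j, false)`. -/
theorem pinnedWalk_mulVec {μ : Finset (Fin n) → ℝ} {A B : Finset (Fin n)}
    (v : {i : Fin n // i ∉ A ∪ B} × Bool → ℝ) (i : {i : Fin n // i ∉ A ∪ B}) (s : Bool)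
    (hpos : 0 < prE (pin μ A B) (stateEvent i.1 s)) :
    (pinnedWalk μ A B).mulVec v (i, s) =
      (1 / ((n : ℝ) - (A.card + B.card) - 1)) * ∑ j, if i = j then 0 else
        (v (j, false) + condPrE (pin μ A B) (fun S => j.1 ∈ S) (stateEvent i.1 s) *
          (v (j, true) - v (j, false))) := by
  rw [Matrix.mulVec, dotProduct, Fintype.sum_prod_type, Finset.mul_sum]
  refine Finset.sum_congr rfl fun j _ => ?_
  by_cases hij : i = j
  · simp [pinnedWalk, hij]
  · simp only [Fintype.sum_bool, pinnedWalk, hij, if_false, stateEvent_true, stateEvent_false,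
      condPrE_not hpos]
    ring

/-- If `c` satisfies the eigenvalue equation of the complete-graph walk with a positive
eigenvalue other than `1`, then `c = 0`. -/
theorem eq_zero_of_sum_erase_eq {ι : Type*} [Fintype ι] [DecidableEq ι] {c : ι → ℝ} {t : ℝ}
    (hcard : (1 : ℝ) < Fintype.card ι) (ht : 0 < t) (ht1 : t ≠ 1)
    (h : ∀ i, (∑ j, if i = j then 0 else c j) = ((Fintype.card ι : ℝ) - 1) * t * c i) :
    c = 0 := by
  have hrow : ∀ i, ∑ j, c j = (((Fintype.card ι : ℝ) - 1) * t + 1) * c i := by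
    intro i
    have hsplit : ∑ j, c j = (∑ j, if i = j then 0 else c j) + c i := by
      have hi : c i = ∑ j, if i = j then c j else 0 := by simp
      rw [hi, ← Finset.sum_add_distrib]
      refine Finset.sum_congr rfl fun j _ => ?_
      split_ifs <;> simp
    rw [hsplit, h i]
    ring
  have htotal : (Fintype.card ι : ℝ) * ∑ j, c j =
      (((Fintype.card ι : ℝ) - 1) * t + 1) * ∑ j, c j := by
    rw [Finset.mul_sum (a := ((Fintype.card ι : ℝ) - 1) * t + 1),
      ← Finset.sum_congr rfl fun i _ => hrow i]
    simp
  have hzero : ∑ j, c j = 0 := by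
    have hprod : (((Fintype.card ι : ℝ) - 1) * (1 - t)) * ∑ j, c j = 0 := by linarith
    refine (mul_eq_zero.mp hprod).resolve_left (mul_ne_zero ?_ (sub_ne_zero.mpr ht1.symm))
    linarith
  funext i
  have hi := hrow i
  rw [hzero] at hi
  have hcoef : 0 < ((Fintype.card ι : ℝ) - 1) * t + 1 := by
    have := mul_pos (sub_pos.mpr hcard) ht
    linarith
  exact (mul_eq_zero.mp hi.symm).resolve_left (ne_of_gt hcoef)

/-- Under nondegeneracy of all pinned marginals, spectral
independence implies that for every feasible pinning `(A,B)` with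
`|A| + |B| = k ≤ n - 2`, every real eigenvalue `t ≠ 1` of the walk matrix
`P_{A,B}` satisfies `t ≤ η k / (n - k - 1)`. -/
theorem statement1 (n : ℕ) (hn : 2 ≤ n) (μ : Finset (Fin n) → ℝ)
    (hpos : ∀ S, 0 ≤ μ S) (hsum : ∑ S : Finset (Fin n), μ S = 1)
    (η : ℕ → ℝ) (hη : ∀ k, k ≤ n - 2 → 0 ≤ η k)
    (hnondeg : ∀ A B : Finset (Fin n), Disjoint A B → Feasible μ A B →
      A.card + B.card ≤ n - 2 → ∀ i : Fin n, i ∉ A ∪ B →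
        0 < prE (pin μ A B) (fun S => i ∈ S)
          ∧ prE (pin μ A B) (fun S => i ∈ S) < 1)
    (hSI : SpectrallyIndependent μ η) :
    ∀ A B : Finset (Fin n), Disjoint A B → Feasible μ A B →
      A.card + B.card ≤ n - 2 →
      ∀ t : ℝ, IsRealEigenvalue (pinnedWalk μ A B) t → t ≠ 1 →
        t ≤ η (A.card + B.card) / ((n : ℝ) - (A.card + B.card) - 1) := by
  intro A B hAB hf hk t ⟨v, hv, hPv⟩ ht1
  have hin : ∀ i : {i : Fin n // i ∉ A ∪ B}, 0 < prE (pin μ A B) (fun S => i.1 ∈ S) :=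
    fun i => (hnondeg A B hAB hf hk i.1 i.2).1
  have hout : ∀ i : {i : Fin n // i ∉ A ∪ B}, 0 < prE (pin μ A B) (fun S => i.1 ∉ S) := by
    intro i
    have hlt := (hnondeg A B hAB hf hk i.1 i.2).2
    have hadd := prE_add_prE_not (pin μ A B) (fun S => i.1 ∈ S)
    rw [sum_pin_eq_one hf] at hadd
    linarith
  have hU : (Fintype.card {i : Fin n // i ∉ A ∪ B} : ℝ) = (n : ℝ) - (A.card + B.card) := by
    have hle : A.card + B.card ≤ n := by omega
    have hcard : Fintype.card {i : Fin n // i ∉ A ∪ B} = n - (A.card + B.card) := by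
      rw [Fintype.card_subtype_compl, Fintype.card_coe, Fintype.card_fin,
        Finset.card_union_of_disjoint hAB]
    rw [hcard, Nat.cast_sub hle, Nat.cast_add]
  have hN : 0 < (n : ℝ) - (A.card + B.card) - 1 := by
    have : ((A.card + B.card + 2 : ℕ) : ℝ) ≤ n := Nat.cast_le.mpr (by omega)
    push_cast at this
    linarith
  rw [le_div_iff₀ hN]
  by_cases ht : t ≤ 0
  · exact (mul_nonpos_of_nonpos_of_nonneg ht hN.le).trans (hη _ hk)
  push Not at ht
  have hrow : ∀ (i : {i : Fin n // i ∉ A ∪ B}) (s : Bool),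
      (∑ j, if i = j then 0 else
        (v (j, false) + condPrE (pin μ A B) (fun S => j.1 ∈ S) (stateEvent i.1 s) *
          (v (j, true) - v (j, false)))) =
        ((n : ℝ) - (A.card + B.card) - 1) * t * v (i, s) := by
    intro i s
    have hs : 0 < prE (pin μ A B) (stateEvent i.1 s) := by
      cases s
      · rw [stateEvent_false]
        exact hout i
      · rw [stateEvent_true]
        exact hin i
    have h := congrFun hPv (i, s)
    rw [pinnedWalk_mulVec v i s hs, Pi.smul_apply, smul_eq_mul] at h
    rw [mul_assoc, ← h, ← mul_assoc, mul_one_div_cancel hN.ne', one_mul]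
  by_cases hd : ∀ i, v (i, true) = v (i, false)
  · refine absurd ?_ hv
    have hc : (fun i => v (i, false)) = 0 := by
      refine eq_zero_of_sum_erase_eq (t := t) (by rw [hU]; linarith) ht ht1 fun i => ?_
      rw [hU, ← hrow i false]
      simp [hd]
    funext p
    obtain ⟨i, s⟩ := p
    have hi : v (i, false) = 0 := congrFun hc i
    cases s
    · exact hi
    · exact (hd i).trans hi
  · push Not at hd
    obtain ⟨i₀, hi₀⟩ := hd
    refine hSI A B hAB hf hk _
      ⟨fun i => if h : i ∉ A ∪ B then v (⟨i, h⟩, true) - v (⟨i, h⟩, false) else 0, ?_, ?_⟩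
    · intro h0
      have h := congrFun h0 i₀.1
      simp only [dif_pos i₀.2, Pi.zero_apply] at h
      exact hi₀ (sub_eq_zero.mp h)
    · funext i
      simp only [Matrix.mulVec, dotProduct, Pi.smul_apply, smul_eq_mul]
      by_cases hi : i ∉ A ∪ B
      · have hdiff := congrArg₂ (· - ·) (hrow ⟨i, hi⟩ true) (hrow ⟨i, hi⟩ false)
        simp only [← Finset.sum_sub_distrib] at hdiff
        rw [dif_pos hi, mul_sub, mul_comm t, ← hdiff]
        rw [← Finset.sum_subset (Finset.subset_univ (Finset.univ.filter fun j => j ∉ A ∪ B))]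
        · rw [Finset.sum_subtype (p := fun j => j ∉ A ∪ B) _ (by simp)]
          refine Finset.sum_congr rfl fun j _ => ?_
          rw [dif_pos j.2]
          by_cases hij : i = j.1
          · simp [pinnedPsi, hij]
          · have hij' : (⟨i, hi⟩ : {i : Fin n // i ∉ A ∪ B}) ≠ j := fun h => hij (by rw [← h])
            rw [if_neg hij', if_neg hij', pinnedPsi,
              if_pos ⟨hij, hi, j.2, hin ⟨i, hi⟩, hout ⟨i, hi⟩⟩]
            rw [stateEvent_true, stateEvent_false]
            ring
        · intro j _ hj
          rw [dif_neg (by simpa using hj), mul_zero]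
      · rw [dif_neg hi, mul_zero]
        refine Finset.sum_eq_zero fun j _ => ?_
        rw [pinnedPsi, if_neg fun h => hi h.2.1, zero_mul]

end PaperStmt
end
end

section
/- There is a universal constant c ≥ 1 with the following property. Let Δ ≥ 3 be an integer, δ ∈ (0,1), λ = (1−δ)·λ_c(Δ), and let G be a simple graph on [n] (n ≥ 2) of maximum degree at most Δ. Then the hardcore distribution μ = μ_{G,λ} is (η_0,…,η_{n−2})-spectrally independent with η_k = min{exp(c/δ), (λ/(1+λ))·(n−k−1)}; that is, for every feasible pinning (A,B) with |A|+|B| = k ≤ n−2, every real eigenvalue of Ψ_{A,B} is at most min{exp(c/δ), (λ/(1+λ))·(n−k−1)}. -/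
open scoped Classical
open Finset

noncomputable section

namespace PaperStmt

variable {n : ℕ}

/-- `S` is an independent set of `G`. -/
def IsIndepSet (G : SimpleGraph (Fin n)) (S : Finset (Fin n)) : Prop :=
  ∀ i ∈ S, ∀ j ∈ S, ¬ G.Adj i j

/-- The hardcore partition function `Z_G(λ)`. -/
def hardcoreZ (G : SimpleGraph (Fin n)) (lam : ℝ) : ℝ :=
  ∑ S : Finset (Fin n), if IsIndepSet G S then lam ^ S.card else 0

/-- The hardcore distribution `μ_{G,λ}`. -/
def hardcore (G : SimpleGraph (Fin n)) (lam : ℝ) : Finset (Fin n) → ℝ :=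
  fun S => if IsIndepSet G S then lam ^ S.card / hardcoreZ G lam else 0

/-- The uniqueness threshold `λ_c(Δ) = (Δ-1)^(Δ-1) / (Δ-2)^Δ`. -/
def lamC (Δ : ℕ) : ℝ := ((Δ : ℝ) - 1) ^ (Δ - 1) / ((Δ : ℝ) - 2) ^ Δ

/-! ### One-variable estimates -/

lemma pow_mul_sub_le_one (D : ℕ) (u : ℝ) (hu : 0 ≤ u) :
    u ^ D * ((D : ℝ) + 1 - D * u) ≤ 1 := by
  induction D with
  | zero => simp
  | succ D ih =>
    have h : u ^ (D + 1) * (((D + 1 : ℕ) : ℝ) + 1 - ((D + 1 : ℕ) : ℝ) * u)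
        = u ^ D * ((D : ℝ) + 1 - D * u) - (D + 1) * (u ^ D * (u - 1) ^ 2) := by
      push_cast; ring
    rw [h]
    have : 0 ≤ ((D : ℝ) + 1) * (u ^ D * (u - 1) ^ 2) := by positivity
    linarith

lemma lamC_pos {Δ : ℕ} (hΔ : 3 ≤ Δ) : 0 < lamC Δ := by
  have h : (3 : ℝ) ≤ Δ := by exact_mod_cast hΔ
  unfold lamC
  have h1 : (0 : ℝ) < (Δ : ℝ) - 1 := by linarith
  have h2 : (0 : ℝ) < (Δ : ℝ) - 2 := by linarith
  positivity

/-- `λ_c(Δ)` is the reciprocal of the maximum of `x ↦ (1-x)^D (D² x - 1)`, `D = Δ - 1`. -/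
lemma lamC_mul_pow_le_one {D : ℕ} (hD : 2 ≤ D) {x : ℝ} (hx : x ≤ 1) :
    lamC (D + 1) * (1 - x) ^ D * ((D : ℝ) ^ 2 * x - 1) ≤ 1 := by
  have h : (2 : ℝ) ≤ D := by exact_mod_cast hD
  have hD0 : (D : ℝ) ≠ 0 := by positivity
  have hD1 : (D : ℝ) - 1 ≠ 0 := by linarith
  have key := pow_mul_sub_le_one D ((D : ℝ) * (1 - x) / (D - 1))
    (div_nonneg (mul_nonneg (by linarith) (by linarith)) (by linarith))
  refine le_of_eq_of_le ?_ key
  have e1 : ((D + 1 : ℕ) : ℝ) - 1 = D := by push_cast; ring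
  have e2 : ((D + 1 : ℕ) : ℝ) - 2 = D - 1 := by push_cast; ring
  rw [lamC, e1, e2, Nat.add_sub_cancel, div_pow, mul_pow, pow_succ ((D : ℝ) - 1)]
  field_simp
  ring

lemma lamC_mul_le {Δ : ℕ} (hΔ : 3 ≤ Δ) : lamC Δ * ((Δ : ℝ) - 2) ≤ 8 := by
  obtain ⟨m, rfl⟩ : ∃ m, Δ = m + 3 := ⟨Δ - 3, by omega⟩
  have hm : (0 : ℝ) < (m : ℝ) + 1 := by positivity
  have e1 : ((m + 3 : ℕ) : ℝ) - 1 = (m : ℝ) + 2 := by push_cast; ring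
  have e2 : ((m + 3 : ℕ) : ℝ) - 2 = (m : ℝ) + 1 := by push_cast; ring
  have e3 : m + 3 - 1 = m + 2 := by omega
  have h1 : lamC (m + 3) * (((m + 3 : ℕ) : ℝ) - 2) = (1 + 1 / ((m : ℝ) + 1)) ^ (m + 2) := by
    rw [lamC, e1, e2, e3, pow_succ ((m : ℝ) + 1) (m + 2)]
    have : (1 : ℝ) + 1 / ((m : ℝ) + 1) = ((m : ℝ) + 2) / ((m : ℝ) + 1) := by
      field_simp; ring
    rw [this, div_pow]
    field_simp
  have h2 : (1 + 1 / ((m : ℝ) + 1)) ≤ Real.exp (1 / ((m : ℝ) + 1)) := by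
    have := Real.add_one_le_exp (1 / ((m : ℝ) + 1)); linarith
  have h3 : Real.exp (1 / ((m : ℝ) + 1)) ^ (m + 2) ≤ Real.exp 2 := by
    rw [← Real.exp_nat_mul]
    apply Real.exp_le_exp.mpr
    rw [mul_one_div, div_le_iff₀ hm]
    push_cast
    have : (0 : ℝ) ≤ m := by positivity
    linarith
  have h4 : Real.exp 2 ≤ 8 := by
    have : Real.exp 2 = Real.exp 1 ^ 2 := by rw [← Real.exp_nat_mul]; norm_num
    rw [this]
    have := Real.exp_one_lt_d9
    have := Real.exp_pos 1
    nlinarith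
  rw [h1]
  calc _ ≤ Real.exp (1 / ((m : ℝ) + 1)) ^ (m + 2) := by gcongr
    _ ≤ _ := h3.trans h4

lemma lamC_le_eight {Δ : ℕ} (hΔ : 3 ≤ Δ) : lamC Δ ≤ 8 := by
  have h : (3 : ℝ) ≤ Δ := by exact_mod_cast hΔ
  nlinarith [lamC_mul_le hΔ, lamC_pos hΔ]

lemma natCast_mul_lamC_le {Δ : ℕ} (hΔ : 3 ≤ Δ) : (Δ : ℝ) * lamC Δ ≤ 24 := by
  nlinarith [lamC_mul_le hΔ, lamC_le_eight hΔ]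

/-- The arithmetic-geometric mean inequality with at most `D` factors. -/
lemma prod_one_sub_le_pow {ι : Type*} (s : Finset ι) (q : ι → ℝ) (D : ℕ) (hD : 0 < D)
    (hs : s.card ≤ D) (hq0 : ∀ i ∈ s, 0 ≤ q i) (hq1 : ∀ i ∈ s, q i < 1) :
    (∑ i ∈ s, q i) / D < 1 ∧
      ∏ i ∈ s, (1 - q i) ≤ (1 - (∑ i ∈ s, q i) / D) ^ D := by
  have hD' : (0 : ℝ) < D := by exact_mod_cast hD
  have hsD : (s.card : ℝ) ≤ D := by exact_mod_cast hs
  set x := (∑ i ∈ s, q i) / D with hx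
  have hsum : ∑ i ∈ s, q i = D * x := by rw [hx]; field_simp
  have hx0 : 0 ≤ x := div_nonneg (Finset.sum_nonneg hq0) hD'.le
  have hx1 : x < 1 := by
    rw [hx, div_lt_one hD']
    rcases s.eq_empty_or_nonempty with h | h
    · simpa [h] using hD'
    · calc ∑ i ∈ s, q i < ∑ i ∈ s, (1 : ℝ) := Finset.sum_lt_sum_of_nonempty h hq1
        _ ≤ D := by simpa using hsD
  refine ⟨hx1, ?_⟩
  have hy : 0 < 1 - x := by linarith
  have hfac : ∀ i ∈ s, 1 - q i ≤ (1 - x) * Real.exp (-(q i - x) / (1 - x)) := by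
    intro i _
    have h := Real.add_one_le_exp (-(q i - x) / (1 - x))
    calc 1 - q i = (1 - x) * (-(q i - x) / (1 - x) + 1) := by field_simp; ring
      _ ≤ _ := by gcongr
  have hexp : Real.exp (-(x / (1 - x))) ≤ 1 - x := by
    have h := Real.add_one_le_exp (x / (1 - x))
    have h' : x / (1 - x) + 1 = (1 - x)⁻¹ := by field_simp; ring
    rw [h'] at h
    rw [Real.exp_neg]
    exact inv_le_of_inv_le₀ hy h
  calc ∏ i ∈ s, (1 - q i)
      ≤ ∏ i ∈ s, ((1 - x) * Real.exp (-(q i - x) / (1 - x))) :=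
        Finset.prod_le_prod (fun i hi => by linarith [hq1 i hi]) hfac
    _ = (1 - x) ^ s.card * Real.exp (-(x / (1 - x))) ^ (D - s.card) := by
        rw [Finset.prod_mul_distrib, Finset.prod_const, ← Real.exp_sum, ← Real.exp_nat_mul,
          Nat.cast_sub hs, ← Finset.sum_div, Finset.sum_neg_distrib, Finset.sum_sub_distrib, hsum]
        congr 2
        simp only [Finset.sum_const, nsmul_eq_mul]
        ring
    _ ≤ (1 - x) ^ s.card * (1 - x) ^ (D - s.card) := by gcongr
    _ = (1 - x) ^ D := by rw [← pow_add, Nat.add_sub_cancel' hs]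

/-- One step of the tree recursion contracts, in the potential `√q`, below the threshold. -/
lemma sqrt_mul_sum_sqrt_le {ι : Type*} (s : Finset ι) (q : ι → ℝ) {D : ℕ} (hD : 2 ≤ D)
    (hs : s.card ≤ D) (hq0 : ∀ i ∈ s, 0 ≤ q i) (hq1 : ∀ i ∈ s, q i < 1)
    {δ : ℝ} (hδ0 : 0 < δ) (hδ1 : δ < 1) {l : ℝ} (hl : l = (1 - δ) * lamC (D + 1))
    {a : ℝ} (ha : a = ∏ i ∈ s, (1 - q i)) :
    √(l * a / (1 + l * a)) * ∑ i ∈ s, √(q i) ≤ 1 - δ / 18 := by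
  have hDr : (2 : ℝ) ≤ D := by exact_mod_cast hD
  have hsD : (s.card : ℝ) ≤ D := by exact_mod_cast hs
  have hc := lamC_pos (show 3 ≤ D + 1 by omega)
  have hc8 := lamC_le_eight (show 3 ≤ D + 1 by omega)
  have hl0 : 0 < l := by rw [hl]; exact mul_pos (by linarith) hc
  have hl8 : l ≤ 8 := by rw [hl]; nlinarith
  obtain ⟨hx1, hprod⟩ := prod_one_sub_le_pow s q D (by omega) hs hq0 hq1
  set x := (∑ i ∈ s, q i) / D with hx
  have hsum : ∑ i ∈ s, q i = D * x := by rw [hx]; field_simp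
  have hx0 : 0 ≤ x := div_nonneg (Finset.sum_nonneg hq0) (by linarith)
  set b := (1 - x) ^ D with hb
  have hb0 : 0 ≤ b := pow_nonneg (by linarith) D
  have hb1 : b ≤ 1 := pow_le_one₀ (by linarith) (by linarith)
  have ha0 : 0 ≤ a := by
    rw [ha]; exact Finset.prod_nonneg fun i hi => by linarith [hq1 i hi]
  rw [← ha] at hprod
  have hCS : (∑ i ∈ s, √(q i)) ^ 2 ≤ (D : ℝ) ^ 2 * x := by
    calc (∑ i ∈ s, √(q i)) ^ 2 ≤ s.card * ∑ i ∈ s, √(q i) ^ 2 := sq_sum_le_card_mul_sum_sq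
      _ = s.card * ∑ i ∈ s, q i := by
        congr 1; exact Finset.sum_congr rfl fun i hi => Real.sq_sqrt (hq0 i hi)
      _ = s.card * (D * x) := by rw [hsum]
      _ ≤ D * (D * x) := by gcongr
      _ = _ := by ring
  have hmono : l * a / (1 + l * a) ≤ l * b / (1 + l * b) := by
    rw [div_le_div_iff₀ (by positivity) (by positivity)]
    nlinarith
  have hcrit : l * b * ((D : ℝ) ^ 2 * x) ≤ (1 - δ / 9) * (1 + l * b) := by
    have h1 := lamC_mul_pow_le_one hD hx1.le
    rw [← hb] at h1
    have h2 : l * b * ((D : ℝ) ^ 2 * x - 1) ≤ 1 - δ := by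
      have := mul_le_mul_of_nonneg_left h1 (show 0 ≤ 1 - δ by linarith)
      rw [hl]; linarith
    have h3 : l * b ≤ 8 := by nlinarith
    nlinarith
  have hsq : (√(l * a / (1 + l * a)) * ∑ i ∈ s, √(q i)) ^ 2 ≤ 1 - δ / 9 := by
    rw [mul_pow, Real.sq_sqrt (by positivity)]
    calc l * a / (1 + l * a) * (∑ i ∈ s, √(q i)) ^ 2
        ≤ l * b / (1 + l * b) * ((D : ℝ) ^ 2 * x) := by gcongr
      _ ≤ 1 - δ / 9 := by
        rw [div_mul_eq_mul_div, div_le_iff₀ (by positivity)]; exact hcrit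
  refine le_of_sq_le_sq (hsq.trans ?_) (by linarith)
  nlinarith [sq_nonneg δ]

/-! ### The hardcore model on induced subgraphs -/

/-- The weight of a vertex set in the hardcore model. -/
def weight (G : SimpleGraph (Fin n)) (l : ℝ) (S : Finset (Fin n)) : ℝ :=
  if IsIndepSet G S then l ^ S.card else 0

/-- The weighted sum of `f` over the subsets of `W`. -/
def weightedSum (G : SimpleGraph (Fin n)) (l : ℝ) (W : Finset (Fin n))
    (f : Finset (Fin n) → ℝ) : ℝ :=
  ∑ S ∈ W.powerset, weight G l S * f S

/-- The partition function of the subgraph induced on `W`. -/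
def partZ (G : SimpleGraph (Fin n)) (l : ℝ) (W : Finset (Fin n)) : ℝ :=
  weightedSum G l W fun _ => 1

/-- The total weight of the subsets of `W` that contain `v`. -/
def occZ (G : SimpleGraph (Fin n)) (l : ℝ) (W : Finset (Fin n)) (v : Fin n) : ℝ :=
  weightedSum G l W fun S => if v ∈ S then 1 else 0

/-- The occupation probability of `v` in the subgraph induced on `W`. -/
def marg (G : SimpleGraph (Fin n)) (l : ℝ) (W : Finset (Fin n)) (v : Fin n) : ℝ :=
  occZ G l W v / partZ G l W

/-- The vertices of `W` outside the closed neighbourhood of `r`. -/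
def away (G : SimpleGraph (Fin n)) (W : Finset (Fin n)) (r : Fin n) : Finset (Fin n) :=
  (W.erase r).filter fun w => ¬ G.Adj r w

/-- The `ℓ¹` distance between the occupation probabilities on `U` and on `V`. -/
def margDist (G : SimpleGraph (Fin n)) (l : ℝ) (U V : Finset (Fin n)) : ℝ :=
  ∑ v, |marg G l U v - marg G l V v|

section Recursion

variable (G : SimpleGraph (Fin n)) {l : ℝ}

lemma weight_nonneg (hl : 0 ≤ l) (S : Finset (Fin n)) : 0 ≤ weight G l S := by
  unfold weight; split_ifs <;> positivity

lemma isIndepSet_insert {r : Fin n} {S : Finset (Fin n)} :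
    IsIndepSet G (insert r S) ↔ IsIndepSet G S ∧ ∀ w ∈ S, ¬ G.Adj r w := by
  constructor
  · intro h
    exact ⟨fun i hi j hj => h i (mem_insert_of_mem hi) j (mem_insert_of_mem hj),
      fun w hw => h r (mem_insert_self _ _) w (mem_insert_of_mem hw)⟩
  · rintro ⟨h, h'⟩ i hi j hj
    rw [mem_insert] at hi hj
    rcases hi with rfl | hi <;> rcases hj with rfl | hj
    · exact G.irrefl
    · exact h' j hj
    · exact fun e => h' i hi e.symm
    · exact h i hi j hj

lemma weight_insert {r : Fin n} {S : Finset (Fin n)} (hr : r ∉ S) :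
    weight G l (insert r S) = if ∀ w ∈ S, ¬ G.Adj r w then l * weight G l S else 0 := by
  unfold weight
  rw [isIndepSet_insert, card_insert_of_notMem hr]
  by_cases h1 : IsIndepSet G S <;> by_cases h2 : ∀ w ∈ S, ¬ G.Adj r w
  · rw [if_pos ⟨h1, h2⟩, if_pos h2, if_pos h1, pow_succ']
  · rw [if_neg (fun h => h2 h.2), if_neg h2]
  · rw [if_neg (fun h => h1 h.1), if_pos h2, if_neg h1, mul_zero]
  · rw [if_neg (fun h => h2 h.2), if_neg h2]

lemma weightedSum_eq_add {W : Finset (Fin n)} {r : Fin n} (hr : r ∈ W)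
    (f : Finset (Fin n) → ℝ) :
    weightedSum G l W f = weightedSum G l (W.erase r) f
      + l * weightedSum G l (away G W r) (fun S => f (insert r S)) := by
  unfold weightedSum
  conv_lhs => rw [← insert_erase hr]
  rw [sum_powerset_insert (notMem_erase r W), mul_sum]
  congr 1
  symm
  rw [← sum_subset (s₁ := (away G W r).powerset) (s₂ := (W.erase r).powerset)
    (f := fun S => weight G l (insert r S) * f (insert r S))
    (powerset_mono.mpr (filter_subset _ _))]
  · refine sum_congr rfl fun S hS => ?_
    rw [mem_powerset] at hS
    have hrS : r ∉ S := fun h => by simpa [away] using hS h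
    rw [weight_insert G hrS, if_pos fun w hw => (mem_filter.mp (hS hw)).2]
    ring
  · intro S hS hS'
    rw [mem_powerset] at hS hS'
    have hrS : r ∉ S := fun h => by simpa using hS h
    rw [weight_insert G hrS, if_neg, zero_mul]
    exact fun h => hS' fun w hw => mem_filter.mpr ⟨hS hw, h w hw⟩

lemma partZ_eq_add {W : Finset (Fin n)} {r : Fin n} (hr : r ∈ W) :
    partZ G l W = partZ G l (W.erase r) + l * partZ G l (away G W r) :=
  weightedSum_eq_add G hr _

lemma occZ_of_notMem {W : Finset (Fin n)} {v : Fin n} (hv : v ∉ W) : occZ G l W v = 0 := by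
  refine sum_eq_zero fun S hS => ?_
  dsimp only
  rw [if_neg fun h => hv (mem_powerset.mp hS h), mul_zero]

lemma occZ_self {W : Finset (Fin n)} {r : Fin n} (hr : r ∈ W) :
    occZ G l W r = l * partZ G l (away G W r) := by
  have h : occZ G l (W.erase r) r = 0 := occZ_of_notMem G (notMem_erase r W)
  unfold occZ at h ⊢
  rw [weightedSum_eq_add G hr, h, zero_add]
  simp [partZ]

lemma occZ_of_ne {W : Finset (Fin n)} {r v : Fin n} (hr : r ∈ W) (hv : v ≠ r) :
    occZ G l W v = occZ G l (W.erase r) v + l * occZ G l (away G W r) v := by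
  unfold occZ
  rw [weightedSum_eq_add G hr]
  simp [mem_insert, hv]

lemma partZ_pos (hl : 0 < l) (W : Finset (Fin n)) : 0 < partZ G l W := by
  refine sum_pos' (fun S _ => by simpa using weight_nonneg G hl.le S)
    ⟨∅, empty_mem_powerset W, ?_⟩
  simp [weight, IsIndepSet]

lemma partZ_mono (hl : 0 < l) {U V : Finset (Fin n)} (h : U ⊆ V) :
    partZ G l U ≤ partZ G l V :=
  sum_le_sum_of_subset_of_nonneg (powerset_mono.mpr h)
    fun S _ _ => by simpa using weight_nonneg G hl.le S

lemma marg_of_notMem {W : Finset (Fin n)} {v : Fin n} (hv : v ∉ W) : marg G l W v = 0 := by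
  rw [marg, occZ_of_notMem G hv, zero_div]

lemma marg_nonneg (hl : 0 < l) (W : Finset (Fin n)) (v : Fin n) : 0 ≤ marg G l W v := by
  refine div_nonneg (sum_nonneg fun S _ => mul_nonneg (weight_nonneg G hl.le S) ?_)
    (partZ_pos G hl W).le
  dsimp only
  split_ifs <;> simp

lemma marg_le (hl : 0 < l) (W : Finset (Fin n)) (v : Fin n) :
    marg G l W v ≤ l / (1 + l) := by
  by_cases hv : v ∈ W
  · have h1 := partZ_pos G hl (away G W v)
    have h2 := partZ_pos G hl (W.erase v)
    have h3 : partZ G l (away G W v) ≤ partZ G l (W.erase v) :=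
      partZ_mono G hl (filter_subset _ _)
    rw [marg, occZ_self G hv, partZ_eq_add G hv, div_le_div_iff₀ (by positivity) (by positivity)]
    nlinarith [mul_le_mul_of_nonneg_left h3 hl.le]
  · rw [marg_of_notMem G hv]; positivity

lemma one_sub_marg (hl : 0 < l) {W : Finset (Fin n)} {r : Fin n} (hr : r ∈ W) :
    1 - marg G l W r = partZ G l (W.erase r) / partZ G l W := by
  have h := (partZ_pos G hl W).ne'
  rw [marg, occZ_self G hr, eq_div_iff h, sub_mul, div_mul_cancel₀ _ h, partZ_eq_add G hr]
  ring

/-- Deleting `r` moves the occupation probabilities by `Pr[r]` times the influence of `r`. -/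
lemma margDist_erase (hl : 0 < l) {W : Finset (Fin n)} {r : Fin n} (hr : r ∈ W) :
    margDist G l (W.erase r) W
      = marg G l W r * (1 + margDist G l (away G W r) (W.erase r)) := by
  unfold margDist
  have hq := marg_nonneg G hl W r
  rw [← add_sum_erase univ _ (mem_univ r), ← add_sum_erase univ _ (mem_univ r),
    marg_of_notMem G (notMem_erase r W), marg_of_notMem G (show r ∉ away G W r by simp [away]),
    zero_sub, abs_neg, abs_of_nonneg hq, sub_zero, abs_zero, zero_add, mul_add, mul_one, mul_sum]
  congr 1
  refine sum_congr rfl fun v hv => ?_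
  rw [mem_erase] at hv
  have h1 := partZ_pos G hl W
  have h2 := partZ_pos G hl (W.erase r)
  have h3 := partZ_pos G hl (away G W r)
  have key : marg G l (W.erase r) v - marg G l W v
      = -(marg G l W r * (marg G l (away G W r) v - marg G l (W.erase r) v)) := by
    unfold marg
    rw [occZ_of_ne G hr hv.1, occZ_self G hr]
    rw [partZ_eq_add G hr] at h1 ⊢
    field_simp
    ring
  rw [key, abs_neg, abs_mul, abs_of_nonneg hq]

lemma margDist_self (W : Finset (Fin n)) : margDist G l W W = 0 := by simp [margDist]

lemma margDist_triangle (U V W : Finset (Fin n)) :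
    margDist G l U W ≤ margDist G l U V + margDist G l V W := by
  unfold margDist
  rw [← sum_add_distrib]
  exact sum_le_sum fun v _ => abs_sub_le _ _ _

/-- Telescoping over the deletion of a set `N` of vertices. -/
lemma exists_telescope (hl : 0 < l) {C : ℝ} (U N : Finset (Fin n)) (hN : N ⊆ U)
    (hC : ∀ u ∈ N, ∀ W ⊆ U, u ∈ W →
      √(marg G l W u) * (1 + margDist G l (away G W u) (W.erase u)) ≤ C) :
    ∃ q : Fin n → ℝ, (∀ u ∈ N, 0 ≤ q u ∧ q u ≤ l / (1 + l)) ∧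
      partZ G l (U \ N) / partZ G l U = ∏ u ∈ N, (1 - q u) ∧
      margDist G l (U \ N) U ≤ ∑ u ∈ N, √(q u) * C := by
  induction N using Finset.induction_on with
  | empty =>
    exact ⟨fun _ => 0, by simp, by simp [(partZ_pos G hl U).ne'], by simp [margDist_self]⟩
  | insert a N ha ih =>
    obtain ⟨q, hq, hZ, hd⟩ := ih ((subset_insert a N).trans hN)
      fun u hu => hC u (mem_insert_of_mem hu)
    have haU : a ∈ U \ N := mem_sdiff.mpr ⟨hN (mem_insert_self a N), ha⟩
    have hset : U \ insert a N = (U \ N).erase a := by ext; simp; tauto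
    have hne : ∀ u ∈ N, u ≠ a := fun u hu h => ha (h ▸ hu)
    have hupd : ∀ u ∈ N, Function.update q a (marg G l (U \ N) a) u = q u :=
      fun u hu => Function.update_of_ne (hne u hu) _ _
    refine ⟨Function.update q a (marg G l (U \ N) a), ?_, ?_, ?_⟩
    · intro u hu
      rcases mem_insert.mp hu with rfl | hu
      · rw [Function.update_self]
        exact ⟨marg_nonneg G hl _ _, marg_le G hl _ _⟩
      · rw [hupd u hu]; exact hq u hu
    · rw [prod_insert ha, Function.update_self, prod_congr rfl fun u hu => by rw [hupd u hu],
        ← hZ, one_sub_marg G hl haU, hset]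
      have := (partZ_pos G hl (U \ N)).ne'
      field_simp
    · rw [sum_insert ha, Function.update_self, sum_congr rfl fun u hu => by rw [hupd u hu], hset]
      refine (margDist_triangle G _ (U \ N) _).trans (add_le_add ?_ hd)
      rw [margDist_erase G hl haU]
      have h := hC a (mem_insert_self a N) (U \ N) sdiff_subset haU
      calc _ = √(marg G l (U \ N) a) * (√(marg G l (U \ N) a) *
            (1 + margDist G l (away G (U \ N) a) ((U \ N).erase a))) := by
            rw [← mul_assoc, Real.mul_self_sqrt (marg_nonneg G hl _ _)]
        _ ≤ _ := by gcongr

lemma away_eq_sdiff (W : Finset (Fin n)) (r : Fin n) :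
    away G W r = W.erase r \ (W.erase r).filter (G.Adj r) := filter_not _ _

lemma card_filter_adj_lt {D : ℕ} (hdeg : ∀ v : Fin n, (G.neighborSet v).ncard ≤ D + 1)
    {r u : Fin n} (hru : G.Adj r u) {W : Finset (Fin n)} (hr : r ∉ W) :
    ((W.erase u).filter (G.Adj u)).card ≤ D := by
  have h : (insert r ((W.erase u).filter (G.Adj u)) : Finset (Fin n)).card
      ≤ (G.neighborSet u).ncard := by
    rw [← Set.ncard_coe_finset]
    refine Set.ncard_le_ncard (fun w hw => ?_) (Set.toFinite _)
    rcases mem_insert.mp (mem_coe.mp hw) with rfl | hw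
    · exact hru.symm
    · exact (mem_filter.mp hw).2
  rw [card_insert_of_notMem (by simp [hr])] at h
  have := hdeg u
  omega

/-- In a subgraph where `r` has at most `D` neighbours, its total influence in the potential `√q`
is bounded uniformly in the size of the graph. -/
lemma sqrt_marg_mul_influence_le {D : ℕ} (hD : 2 ≤ D)
    (hdeg : ∀ v : Fin n, (G.neighborSet v).ncard ≤ D + 1)
    {δ : ℝ} (hδ0 : 0 < δ) (hδ1 : δ < 1) (hl : l = (1 - δ) * lamC (D + 1))
    (W : Finset (Fin n)) (r : Fin n) (hr : r ∈ W)
    (hcard : ((W.erase r).filter (G.Adj r)).card ≤ D) :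
    √(marg G l W r) * (1 + margDist G l (away G W r) (W.erase r))
      ≤ 18 / δ * √(l / (1 + l)) := by
  have hl0 : 0 < l := by
    rw [hl]; exact mul_pos (by linarith) (lamC_pos (by omega))
  induction hm : W.card using Nat.strong_induction_on generalizing W r with
  | _ m ih =>
    set C := 18 / δ * √(l / (1 + l)) with hC
    have hC0 : 0 ≤ C := by positivity
    set N := (W.erase r).filter (G.Adj r) with hN
    obtain ⟨q, hq, hZ, hd⟩ := exists_telescope G hl0 (C := C) (W.erase r) N (filter_subset _ _)
      (by
        intro u hu W' hW' huW'
        have hrW' : r ∉ W' := fun h => notMem_erase r W (hW' h)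
        refine ih W'.card ?_ W' u huW'
          (card_filter_adj_lt G hdeg (mem_filter.mp hu).2 hrW') rfl
        rw [← hm]
        exact (card_le_card hW').trans_lt (card_erase_lt_of_mem hr))
    rw [← away_eq_sdiff] at hZ hd
    have h1 := partZ_pos G hl0 (W.erase r)
    have h2 := partZ_pos G hl0 (away G W r)
    have hM1 : l / (1 + l) < 1 := (div_lt_one (by linarith)).mpr (by linarith)
    have hqr : marg G l W r = l * (partZ G l (away G W r) / partZ G l (W.erase r))
        / (1 + l * (partZ G l (away G W r) / partZ G l (W.erase r))) := by
      rw [marg, occZ_self G hr, partZ_eq_add G hr]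
      field_simp
    have hcon := sqrt_mul_sum_sqrt_le N q hD hcard (fun i hi => (hq i hi).1)
      (fun i hi => (hq i hi).2.trans_lt hM1) hδ0 hδ1 hl hZ
    rw [← hqr] at hcon
    calc √(marg G l W r) * (1 + margDist G l (away G W r) (W.erase r))
        ≤ √(marg G l W r) * (1 + ∑ u ∈ N, √(q u) * C) := by gcongr
      _ = √(marg G l W r) + (√(marg G l W r) * ∑ u ∈ N, √(q u)) * C := by
        rw [← sum_mul]; ring
      _ ≤ √(l / (1 + l)) + (1 - δ / 18) * C := by
        gcongr
        exact marg_le G hl0 W r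
      _ = C := by rw [hC]; field_simp; ring

/-- The total influence of any vertex in any induced subgraph. -/
lemma influence_le {Δ : ℕ} (hΔ : 3 ≤ Δ)
    (hdeg : ∀ v : Fin n, (G.neighborSet v).ncard ≤ Δ)
    {δ : ℝ} (hδ0 : 0 < δ) (hδ1 : δ < 1) (hl : l = (1 - δ) * lamC Δ)
    (W : Finset (Fin n)) (r : Fin n) :
    margDist G l (away G W r) (W.erase r) ≤ 432 / δ := by
  have hl0 : 0 < l := by rw [hl]; exact mul_pos (by linarith) (lamC_pos hΔ)
  obtain ⟨D, rfl⟩ : ∃ D, Δ = D + 1 := ⟨Δ - 1, by omega⟩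
  set N := (W.erase r).filter (G.Adj r) with hN
  set M := l / (1 + l) with hM
  have hM0 : 0 ≤ M := by positivity
  obtain ⟨q, hq, -, hd⟩ := exists_telescope G hl0 (C := 18 / δ * √M) (W.erase r) N
    (filter_subset _ _) (by
      intro u hu W' hW' huW'
      exact sqrt_marg_mul_influence_le G (by omega) hdeg hδ0 hδ1 hl W' u huW'
        (card_filter_adj_lt G hdeg (mem_filter.mp hu).2
          fun h => notMem_erase r W (hW' h)))
  rw [← away_eq_sdiff] at hd
  have hcard : (N.card : ℝ) ≤ ((D + 1 : ℕ) : ℝ) := by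
    have h : N.card ≤ (G.neighborSet r).ncard := by
      rw [← Set.ncard_coe_finset]
      exact Set.ncard_le_ncard (fun w hw => (mem_filter.mp hw).2) (Set.toFinite _)
    exact_mod_cast h.trans (hdeg r)
  have hMl : M ≤ lamC (D + 1) := by
    have h1 : M ≤ l := div_le_self hl0.le (by linarith)
    have h2 : l ≤ lamC (D + 1) := by rw [hl]; nlinarith [lamC_pos hΔ]
    linarith
  calc _ ≤ _ := hd
    _ ≤ ∑ u ∈ N, √M * (18 / δ * √M) := by
      refine sum_le_sum fun u hu => ?_
      gcongr
      exact (hq u hu).2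
    _ = N.card * (18 / δ * M) := by
      rw [sum_const, nsmul_eq_mul, mul_left_comm (√M), Real.mul_self_sqrt hM0]
    _ ≤ ((D + 1 : ℕ) : ℝ) * (18 / δ * lamC (D + 1)) := by gcongr
    _ = 18 / δ * (((D + 1 : ℕ) : ℝ) * lamC (D + 1)) := by ring
    _ ≤ 18 / δ * 24 := by gcongr; exact natCast_mul_lamC_le hΔ
    _ = 432 / δ := by ring

end Recursion

/-! ### Pinnings and the influence matrix -/

/-- The vertices left undetermined by the pinning `(A, B)`. -/
def free (G : SimpleGraph (Fin n)) (A B : Finset (Fin n)) : Finset (Fin n) :=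
  univ.filter fun v => v ∉ A ∧ v ∉ B ∧ ∀ a ∈ A, ¬ G.Adj a v

section Pinning

variable (G : SimpleGraph (Fin n)) {l : ℝ}

lemma IsIndepSet.subset {G : SimpleGraph (Fin n)} {S T : Finset (Fin n)} (hT : IsIndepSet G T)
    (h : S ⊆ T) : IsIndepSet G S :=
  fun i hi j hj => hT i (h hi) j (h hj)

lemma free_insert_left (A B : Finset (Fin n)) (i : Fin n) :
    free G (insert i A) B = away G (free G A B) i := by
  ext v
  simp only [free, away, mem_filter, mem_univ, true_and, mem_insert, mem_erase, not_or,
    forall_eq_or_imp]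
  tauto

lemma free_insert_right (A B : Finset (Fin n)) (i : Fin n) :
    free G A (insert i B) = (free G A B).erase i := by
  ext v
  simp only [free, mem_filter, mem_univ, true_and, mem_insert, mem_erase, not_or]
  tauto

lemma weight_union {A B T : Finset (Fin n)} (hA : IsIndepSet G A) (hT : T ⊆ free G A B) :
    weight G l (A ∪ T) = l ^ A.card * weight G l T := by
  have hfree : ∀ v ∈ T, v ∉ A ∧ v ∉ B ∧ ∀ a ∈ A, ¬ G.Adj a v :=
    fun v hv => by simpa [free] using hT hv
  have hdisj : Disjoint A T := disjoint_right.mpr fun v hv => (hfree v hv).1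
  have hiff : IsIndepSet G (A ∪ T) ↔ IsIndepSet G T := by
    refine ⟨fun h => h.subset subset_union_right, fun h i hi j hj => ?_⟩
    rcases mem_union.mp hi with hi | hi <;> rcases mem_union.mp hj with hj | hj
    · exact hA i hi j hj
    · exact (hfree j hj).2.2 i hi
    · exact fun e => (hfree i hi).2.2 j hj e.symm
    · exact h i hi j hj
  unfold weight
  rw [card_union_of_disjoint hdisj, pow_add]
  by_cases h : IsIndepSet G T
  · rw [if_pos h, if_pos (hiff.mpr h)]
  · rw [if_neg h, if_neg (hiff.not.mpr h), mul_zero]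

/-- The independent sets compatible with a pinning are those of the undetermined subgraph. -/
lemma sum_pinned_eq {A B : Finset (Fin n)} (hAB : Disjoint A B) (hA : IsIndepSet G A)
    (f : Finset (Fin n) → ℝ) :
    (∑ S, if A ⊆ S ∧ Disjoint B S then weight G l S * f S else 0)
      = l ^ A.card * weightedSum G l (free G A B) fun S => f (A ∪ S) := by
  unfold weightedSum
  rw [mul_sum]
  have hfree : ∀ T ⊆ free G A B, ∀ v ∈ T, v ∉ A ∧ v ∉ B :=
    fun T hT v hv => by
      have h := hT hv
      simp only [free, mem_filter] at h
      exact ⟨h.2.1, h.2.2.1⟩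
  symm
  refine sum_of_injOn (fun T => A ∪ T) ?_ (fun _ _ => mem_coe.mpr (mem_univ _)) ?_ ?_
  · intro T hT T' hT' h
    have hT := hfree T (mem_powerset.mp (mem_coe.mp hT))
    have hT' := hfree T' (mem_powerset.mp (mem_coe.mp hT'))
    ext v
    have hv : v ∈ A ∪ T ↔ v ∈ A ∪ T' := by rw [show A ∪ T = A ∪ T' from h]
    simp only [mem_union] at hv
    have := hT v
    have := hT' v
    tauto
  · intro S _ hS
    split_ifs with h
    · have hw : weight G l S = 0 := by
        rw [weight, if_neg]
        intro hind
        refine hS ⟨S \ A, ?_, by simpa using h.1⟩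
        rw [mem_coe, mem_powerset]
        intro v hv
        rw [mem_sdiff] at hv
        simp only [free, mem_filter, mem_univ, true_and]
        exact ⟨hv.2, disjoint_right.mp h.2 hv.1, fun a ha => hind a (h.1 ha) v hv.1⟩
      rw [hw, zero_mul]
    · rfl
  · intro T hT
    rw [mem_powerset] at hT
    have hdisj : Disjoint B (A ∪ T) := disjoint_union_right.mpr
      ⟨hAB.symm, disjoint_right.mpr fun v hv => (hfree T hT v hv).2⟩
    rw [if_pos ⟨subset_union_left, hdisj⟩, weight_union G hA hT]
    ring

lemma hardcoreZ_eq_partZ : hardcoreZ G l = partZ G l univ := by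
  simp [hardcoreZ, partZ, weightedSum, weight]

lemma hardcore_eq (S : Finset (Fin n)) : hardcore G l S = weight G l S / hardcoreZ G l := by
  unfold hardcore weight
  split_ifs <;> simp

/-- The unnormalized weight of an event under the pinning `(A, B)`. -/
def pinnedWeight (G : SimpleGraph (Fin n)) (l : ℝ) (A B : Finset (Fin n))
    (E : Finset (Fin n) → Prop) : ℝ :=
  ∑ S, if (A ⊆ S ∧ Disjoint B S) ∧ E S then weight G l S else 0

lemma prE_pin_eq (A B : Finset (Fin n)) (E : Finset (Fin n) → Prop) :
    prE (pin (hardcore G l) A B) E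
      = (hardcoreZ G l * prE (hardcore G l) fun S => A ⊆ S ∧ Disjoint B S)⁻¹
        * pinnedWeight G l A B E := by
  unfold pinnedWeight
  rw [prE, mul_sum]
  refine sum_congr rfl fun S _ => ?_
  by_cases hE : E S <;> by_cases hS : A ⊆ S ∧ Disjoint B S
  · rw [if_pos hE, if_pos ⟨hS, hE⟩, pin, if_pos hS, hardcore_eq, div_div, div_eq_inv_mul]
  · rw [if_pos hE, if_neg (fun h => hS h.1), pin, if_neg hS, mul_zero]
  · rw [if_neg hE, if_neg (fun h => hE h.2), mul_zero]
  · rw [if_neg hE, if_neg (fun h => hE h.2), mul_zero]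

lemma condPrE_pin_eq (hl : 0 < l) {A B : Finset (Fin n)} (hf : Feasible (hardcore G l) A B)
    (E F : Finset (Fin n) → Prop) :
    condPrE (pin (hardcore G l) A B) E F
      = pinnedWeight G l A B (fun S => E S ∧ F S) / pinnedWeight G l A B F := by
  rw [condPrE, prE_pin_eq, prE_pin_eq]
  refine mul_div_mul_left _ _ (inv_ne_zero (mul_ne_zero ?_ hf.ne'))
  rw [hardcoreZ_eq_partZ]
  exact (partZ_pos G hl _).ne'

/-- A ratio of pinned weights is an occupation probability of the undetermined subgraph. -/
lemma sum_pinned_div_eq_marg (hl : 0 < l) {A B : Finset (Fin n)} (hAB : Disjoint A B)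
    (hA : IsIndepSet G A) {j : Fin n} (hj : j ∉ A) :
    (∑ S, if A ⊆ S ∧ Disjoint B S then weight G l S * (if j ∈ S then 1 else 0) else 0)
      / (∑ S, if A ⊆ S ∧ Disjoint B S then weight G l S * 1 else 0)
      = marg G l (free G A B) j := by
  rw [sum_pinned_eq G hAB hA fun S => if j ∈ S then 1 else 0,
    sum_pinned_eq G hAB hA fun _ => 1, mul_div_mul_left _ _ (by positivity), marg, occZ, partZ]
  simp [hj]

lemma condPrE_mem_eq (hl : 0 < l) {A B : Finset (Fin n)} (hAB : Disjoint A B)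
    (hf : Feasible (hardcore G l) A B) {i j : Fin n} (hij : i ≠ j) (hiB : i ∉ B) (hjA : j ∉ A)
    (hind : IsIndepSet G (insert i A)) :
    condPrE (pin (hardcore G l) A B) (fun S => j ∈ S) (fun S => i ∈ S)
      = marg G l (away G (free G A B) i) j := by
  rw [condPrE_pin_eq G hl hf, ← free_insert_left, ← sum_pinned_div_eq_marg G hl
    (disjoint_insert_left.mpr ⟨hiB, hAB⟩) hind (by simp [hij.symm, hjA])]
  unfold pinnedWeight
  congr 1
  · refine sum_congr rfl fun S _ => ?_
    by_cases hi : i ∈ S <;> by_cases hj : j ∈ S <;> simp [insert_subset_iff, hi, hj]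
  · refine sum_congr rfl fun S _ => ?_
    by_cases hi : i ∈ S <;> simp [insert_subset_iff, hi]

lemma condPrE_notMem_eq (hl : 0 < l) {A B : Finset (Fin n)} (hAB : Disjoint A B)
    (hf : Feasible (hardcore G l) A B) {i j : Fin n} (hiA : i ∉ A) (hjA : j ∉ A)
    (hind : IsIndepSet G A) :
    condPrE (pin (hardcore G l) A B) (fun S => j ∈ S) (fun S => i ∉ S)
      = marg G l ((free G A B).erase i) j := by
  rw [condPrE_pin_eq G hl hf, ← free_insert_right, ← sum_pinned_div_eq_marg G hl
    (disjoint_insert_right.mpr ⟨hiA, hAB⟩) hind hjA]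
  unfold pinnedWeight
  congr 1
  · refine sum_congr rfl fun S _ => ?_
    by_cases hi : i ∈ S <;> by_cases hj : j ∈ S <;> simp [disjoint_insert_left, hi, hj]
  · refine sum_congr rfl fun S _ => ?_
    by_cases hi : i ∈ S <;> simp [disjoint_insert_left, hi]

lemma isIndepSet_insert_of_prE_pos {A B : Finset (Fin n)} {i : Fin n}
    (h : 0 < prE (pin (hardcore G l) A B) fun S => i ∈ S) : IsIndepSet G (insert i A) := by
  obtain ⟨S, -, hS⟩ := exists_ne_zero_of_sum_ne_zero h.ne'
  by_cases hi : i ∈ S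
  · by_cases hA : A ⊆ S ∧ Disjoint B S
    · by_cases hind : IsIndepSet G S
      · exact hind.subset (insert_subset hi hA.1)
      · simp [pin, hardcore, hind] at hS
    · simp [pin, hA] at hS
  · simp [hi] at hS

lemma pinnedPsi_apply (hl : 0 < l) {A B : Finset (Fin n)} (hAB : Disjoint A B)
    (hf : Feasible (hardcore G l) A B) (i j : Fin n) :
    pinnedPsi (hardcore G l) A B i j = 0 ∨ (i ≠ j ∧ i ∉ A ∪ B ∧ j ∉ A ∪ B ∧
      pinnedPsi (hardcore G l) A B i j
        = marg G l (away G (free G A B) i) j - marg G l ((free G A B).erase i) j) := by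
  unfold pinnedPsi
  split_ifs with h
  · right
    obtain ⟨hij, hi, hj, hpos, -⟩ := h
    have hind := isIndepSet_insert_of_prE_pos G hpos
    refine ⟨hij, hi, hj, ?_⟩
    rw [mem_union, not_or] at hi hj
    rw [condPrE_mem_eq G hl hAB hf hij hi.2 hj.1 hind,
      condPrE_notMem_eq G hl hAB hf hi.1 hj.1 (hind.subset (subset_insert i A))]
  · exact Or.inl rfl

lemma sum_abs_pinnedPsi_le_margDist (hl : 0 < l) {A B : Finset (Fin n)} (hAB : Disjoint A B)
    (hf : Feasible (hardcore G l) A B) (i : Fin n) :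
    ∑ j, |pinnedPsi (hardcore G l) A B i j|
      ≤ margDist G l (away G (free G A B) i) ((free G A B).erase i) := by
  refine sum_le_sum fun j _ => ?_
  rcases pinnedPsi_apply G hl hAB hf i j with h | ⟨-, -, -, h⟩
  · rw [h, abs_zero]; exact abs_nonneg _
  · rw [h]

lemma sum_abs_pinnedPsi_le_card (hl : 0 < l) {A B : Finset (Fin n)} (hAB : Disjoint A B)
    (hf : Feasible (hardcore G l) A B) (hcard : A.card + B.card + 1 ≤ n) (i : Fin n) :
    ∑ j, |pinnedPsi (hardcore G l) A B i j|
      ≤ l / (1 + l) * ((n : ℝ) - ((A.card + B.card : ℕ) : ℝ) - 1) := by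
  have hcard' : ((A.card + B.card : ℕ) : ℝ) + 1 ≤ n := by exact_mod_cast hcard
  have hM : 0 ≤ l / (1 + l) := by positivity
  by_cases hi : i ∈ A ∪ B
  · rw [sum_eq_zero]
    · exact mul_nonneg hM (by linarith)
    · intro j _
      rcases pinnedPsi_apply G hl hAB hf i j with h | ⟨-, h, -⟩
      · rw [h, abs_zero]
      · exact absurd hi h
  · have hK : ((univ \ insert i (A ∪ B)).card : ℝ)
        = (n : ℝ) - ((A.card + B.card : ℕ) : ℝ) - 1 := by
      rw [card_sdiff_of_subset (subset_univ _), card_insert_of_notMem hi,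
        card_union_of_disjoint hAB, card_univ, Fintype.card_fin, Nat.cast_sub hcard]
      push_cast; ring
    rw [← hK, mul_comm, ← nsmul_eq_mul, ← sum_const]
    rw [← sum_subset (subset_univ (univ \ insert i (A ∪ B)))]
    · refine sum_le_sum fun j _ => ?_
      rcases pinnedPsi_apply G hl hAB hf i j with h | ⟨-, -, -, h⟩
      · rw [h, abs_zero]; exact hM
      · rw [h, abs_le]
        have h1 := marg_nonneg G hl (away G (free G A B) i) j
        have h2 := marg_nonneg G hl ((free G A B).erase i) j
        have h3 := marg_le G hl (away G (free G A B) i) j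
        have h4 := marg_le G hl ((free G A B).erase i) j
        constructor <;> linarith
    · intro j _ hj
      rcases pinnedPsi_apply G hl hAB hf i j with h | ⟨h1, -, h2, -⟩
      · rw [h, abs_zero]
      · refine absurd ?_ hj
        simpa [h1.symm] using h2

end Pinning

/-- A real eigenvalue is at most any bound on the absolute row sums. -/
lemma IsRealEigenvalue.le_of_row_sums {ι : Type*} [Fintype ι] {M : Matrix ι ι ℝ} {t K : ℝ}
    (ht : IsRealEigenvalue M t) (hK : ∀ i, ∑ j, |M i j| ≤ K) : t ≤ K := by
  obtain ⟨v, hv, hMv⟩ := ht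
  obtain ⟨k, hk⟩ := Function.ne_iff.mp hv
  obtain ⟨i, -, hi⟩ := exists_max_image univ (fun i => |v i|) ⟨k, mem_univ k⟩
  have hpos : 0 < |v i| := (abs_pos.mpr hk).trans_le (hi k (mem_univ k))
  refine le_of_mul_le_mul_right ?_ hpos
  have h := congrFun hMv i
  simp only [Matrix.mulVec, dotProduct, Pi.smul_apply, smul_eq_mul] at h
  calc t * |v i| ≤ |t| * |v i| := by gcongr; exact le_abs_self t
    _ = |∑ j, M i j * v j| := by rw [h, abs_mul]
    _ ≤ ∑ j, |M i j * v j| := abs_sum_le_sum_abs _ _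
    _ ≤ ∑ j, |M i j| * |v i| := sum_le_sum fun j hj => by
      rw [abs_mul]
      exact mul_le_mul_of_nonneg_left (hi j hj) (abs_nonneg _)
    _ = (∑ j, |M i j|) * |v i| := (sum_mul _ _ _).symm
    _ ≤ K * |v i| := by gcongr; exact hK i

/-- The hardcore distribution at `λ = (1-δ)·λ_c(Δ)` on a graph of
maximum degree at most `Δ` is spectrally independent with
`η k = min (exp (c/δ)) ((λ/(1+λ))·(n-k-1))`. -/
theorem statement2 :
    ∃ c : ℝ, 1 ≤ c ∧
      ∀ (Δ : ℕ), 3 ≤ Δ → ∀ δ : ℝ, 0 < δ → δ < 1 →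
      ∀ (n : ℕ), 2 ≤ n → ∀ G : SimpleGraph (Fin n),
      (∀ v : Fin n, (G.neighborSet v).ncard ≤ Δ) →
      SpectrallyIndependent (hardcore G ((1 - δ) * lamC Δ))
        (fun k => min (Real.exp (c / δ))
          ((1 - δ) * lamC Δ / (1 + (1 - δ) * lamC Δ) * ((n : ℝ) - k - 1))) := by
  refine ⟨432, by norm_num, ?_⟩
  intro Δ hΔ δ hδ0 hδ1 n hn G hdeg A B hAB hf hcard t ht
  have hl : 0 < (1 - δ) * lamC Δ := mul_pos (by linarith) (lamC_pos hΔ)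
  refine le_min (ht.le_of_row_sums fun i => ?_) (ht.le_of_row_sums fun i => ?_)
  · calc _ ≤ _ := sum_abs_pinnedPsi_le_margDist G hl hAB hf i
      _ ≤ 432 / δ := influence_le G hΔ hdeg hδ0 hδ1 rfl _ _
      _ ≤ Real.exp (432 / δ) := by linarith [Real.add_one_le_exp (432 / δ)]
  · exact sum_abs_pinnedPsi_le_card G hl hAB hf (by omega) i

end PaperStmt
end
end

section
/- All eigenvalues of the pairwise influence matrix Ψ_μ are real: every complex eigenvalue z of Ψ_μ (i.e. every z in the spectrum of Ψ_μ viewed as a matrix over ℂ via the embedding ℝ → ℂ) satisfies Im z = 0. -/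
open scoped Classical
open Finset

noncomputable section

namespace PaperStmt

variable {n : ℕ}

/-- The pairwise influence matrix `Ψ_μ`. -/
def psi (μ : Finset (Fin n) → ℝ) : Matrix (Fin n) (Fin n) ℝ :=
  fun i j => if i = j then 0 else
    condPrE μ (fun S => j ∈ S) (fun S => i ∈ S)
      - condPrE μ (fun S => j ∈ S) (fun S => i ∉ S)

/-- A real matrix that becomes symmetric after scaling its rows by positive weights has only
real eigenvalues. -/
theorem im_eq_zero_of_mem_spectrum_of_weighted_symm {ι : Type*} [Fintype ι] [DecidableEq ι]
    (A : Matrix ι ι ℝ) (d : ι → ℝ) (hd : ∀ i, 0 < d i)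
    (hA : ∀ i j, d i * A i j = d j * A j i) (z : ℂ)
    (hz : z ∈ spectrum ℂ (A.map (Complex.ofReal : ℝ → ℂ))) : z.im = 0 := by
  rw [← Matrix.spectrum_toLin', ← Module.End.hasEigenvalue_iff_mem_spectrum] at hz
  obtain ⟨v, hv⟩ := hz.exists_hasEigenvector
  have hAv : ∀ i, ∑ j, (A i j : ℂ) * v j = z * v i := fun i => by
    simpa [Matrix.mulVec, dotProduct] using congrFun hv.apply_eq_smul i
  have hform : ∑ i, ∑ j, ((d i * A i j : ℝ) : ℂ) * (star (v i) * v j)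
      = z * ((∑ i, d i * Complex.normSq (v i) : ℝ) : ℂ) := by
    push_cast
    rw [Finset.mul_sum]
    refine Finset.sum_congr rfl fun i _ => ?_
    calc _ = d i * star (v i) * ∑ j, (A i j : ℂ) * v j := by
          rw [Finset.mul_sum]
          exact Finset.sum_congr rfl fun j _ => by ring
      _ = _ := by
          rw [hAv, Complex.normSq_eq_conj_mul_self, starRingEnd_apply]
          ring
  have hreal : (starRingEnd ℂ) (∑ i, ∑ j, ((d i * A i j : ℝ) : ℂ) * (star (v i) * v j))
      = ∑ i, ∑ j, ((d i * A i j : ℝ) : ℂ) * (star (v i) * v j) := by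
    simp only [map_sum, map_mul, Complex.conj_ofReal]
    rw [Finset.sum_comm]
    refine Finset.sum_congr rfl fun i _ => Finset.sum_congr rfl fun j _ => ?_
    rw [hA j i, starRingEnd_apply, starRingEnd_apply, star_star]
    ring
  have hpos : 0 < ∑ i, d i * Complex.normSq (v i) := by
    obtain ⟨k, hk⟩ := Function.ne_iff.mp hv.2
    exact Finset.sum_pos' (fun i _ => mul_nonneg (hd i).le (Complex.normSq_nonneg _))
      ⟨k, Finset.mem_univ k, mul_pos (hd k) (Complex.normSq_pos.mpr hk)⟩
  rw [hform, Complex.conj_eq_iff_im, Complex.im_mul_ofReal] at hreal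
  exact (mul_eq_zero.mp hreal).resolve_right hpos.ne'

theorem prE_and_add_prE_and_not (μ : Finset (Fin n) → ℝ) (E F : Finset (Fin n) → Prop) :
    prE μ (fun S => E S ∧ F S) + prE μ (fun S => E S ∧ ¬ F S) = prE μ E := by
  simp only [prE, ← Finset.sum_add_distrib]
  refine Finset.sum_congr rfl fun S _ => ?_
  by_cases hE : E S <;> by_cases hF : F S <;> simp [hE, hF]

theorem prE_not (μ : Finset (Fin n) → ℝ) (hsum : ∑ S : Finset (Fin n), μ S = 1)
    (F : Finset (Fin n) → Prop) : prE μ (fun S => ¬ F S) = 1 - prE μ F := by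
  rw [eq_sub_iff_add_eq, ← hsum]
  simp only [prE, ← Finset.sum_add_distrib]
  refine Finset.sum_congr rfl fun S _ => ?_
  by_cases hF : F S <;> simp [hF]

/-- Scaling an influence by the variance of the conditioning event gives the covariance. -/
theorem variance_mul_condPrE_sub (μ : Finset (Fin n) → ℝ)
    (hsum : ∑ S : Finset (Fin n), μ S = 1) (E F : Finset (Fin n) → Prop)
    (h0 : 0 < prE μ F) (h1 : prE μ F < 1) :
    prE μ F * (1 - prE μ F) * (condPrE μ E F - condPrE μ E (fun S => ¬ F S))
      = prE μ (fun S => E S ∧ F S) - prE μ E * prE μ F := by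
  have h1' : 1 - prE μ F ≠ 0 := (sub_pos.mpr h1).ne'
  have h0' := h0.ne'
  rw [condPrE, condPrE, prE_not μ hsum, ← prE_and_add_prE_and_not μ E F]
  field_simp
  ring

/-- All eigenvalues of the pairwise influence matrix `Ψ_μ` are
real: every complex element of the spectrum of `Ψ_μ` (viewed as a complex matrix
via `ℝ → ℂ`) has zero imaginary part. -/
theorem statement4 (n : ℕ) (hn : 2 ≤ n) (μ : Finset (Fin n) → ℝ)
    (hpos : ∀ S, 0 ≤ μ S) (hsum : ∑ S : Finset (Fin n), μ S = 1)
    (hmarg : ∀ i : Fin n, 0 < prE μ (fun S => i ∈ S)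
      ∧ prE μ (fun S => i ∈ S) < 1)
    (z : ℂ) (hz : z ∈ spectrum ℂ ((psi μ).map (Complex.ofReal : ℝ → ℂ))) :
    z.im = 0 := by
  refine im_eq_zero_of_mem_spectrum_of_weighted_symm (psi μ)
    (fun i => prE μ (fun S => i ∈ S) * (1 - prE μ (fun S => i ∈ S)))
    (fun i => mul_pos (hmarg i).1 (sub_pos.mpr (hmarg i).2)) (fun i j => ?_) z ?_
  · rcases eq_or_ne i j with rfl | hij
    · rfl
    · simp only [psi, if_neg hij, if_neg hij.symm]
      rw [variance_mul_condPrE_sub μ hsum _ _ (hmarg i).1 (hmarg i).2,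
        variance_mul_condPrE_sub μ hsum _ _ (hmarg j).1 (hmarg j).2]
      simp only [and_comm, mul_comm]
  · convert hz

end PaperStmt
end
end

section
/- Define the 2n×2n real matrix M_∅ indexed by pairs (i,s) ∈ [n]×{in,out} by M_∅((i,s),(j,t)) = (1/(n−1))·(Pr[j has state t | i has state s] − Pr[j has state t]) for i ≠ j, and M_∅((i,s),(i,t)) = 0. Then charpoly(P_∅)·X^n = charpoly(M_∅)·(X − 1)·(X + 1/(n−1))^{n−1} in ℝ[X]; in particular P_∅ has 1 as an eigenvalue, has −1/(n−1) as an eigenvalue of algebraic multiplicity at least n−1, and the spectrum of M_∅ is obtained from that of P_∅ by replacing these n trivial eigenvalues with n copies of 0. -/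
open scoped Classical
open Finset Polynomial

noncomputable section

namespace PaperStmt

variable {n : ℕ}

/-- The skeleton walk matrix `P_∅`, indexed by pairs `(i, s) ∈ [n] × {in, out}`. -/
def skeletonWalk (μ : Finset (Fin n) → ℝ) :
    Matrix (Fin n × Bool) (Fin n × Bool) ℝ :=
  fun p q => if p.1 = q.1 then 0 else
    (1 / ((n : ℝ) - 1)) * condPrE μ (stateEvent q.1 q.2) (stateEvent p.1 p.2)

/-- The centered walk matrix `M_∅`. -/
def centeredWalk (μ : Finset (Fin n) → ℝ) :
    Matrix (Fin n × Bool) (Fin n × Bool) ℝ :=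
  fun p q => if p.1 = q.1 then 0 else
    (1 / ((n : ℝ) - 1)) *
      (condPrE μ (stateEvent q.1 q.2) (stateEvent p.1 p.2)
        - prE μ (stateEvent q.1 q.2))

section LinearAlgebra

variable {ι R : Type*} [Fintype ι] [DecidableEq ι] [CommRing R]

/-- If `M * N = 0`, the characteristic polynomials of `M` and `N` determine that of `M + N`. -/
theorem charpoly_mul_charpoly_of_mul_eq_zero (M N : Matrix ι ι R) (h : M * N = 0) :
    M.charpoly * N.charpoly = X ^ Fintype.card ι * (M + N).charpoly := by
  have hprod : M.charmatrix * N.charmatrix = (X : R[X]) • (M + N).charmatrix := by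
    have hC : M.map C * N.map C = (0 : Matrix ι ι R[X]) := by
      rw [← Matrix.map_mul, h, Matrix.map_zero _ C_0]
    have hadd : (M + N).map C = M.map C + N.map C := Matrix.map_add _ (fun _ _ => C_add) M N
    simp only [Matrix.charmatrix, RingHom.mapMatrix_apply, Matrix.scalar_apply,
      ← Matrix.smul_one_eq_diagonal, hadd, sub_mul, mul_sub, hC, smul_mul_assoc, mul_smul_comm,
      one_mul, mul_one, smul_sub, smul_add]
    abel
  rw [Matrix.charpoly, Matrix.charpoly, ← Matrix.det_mul, hprod, Matrix.det_smul, Matrix.charpoly]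

/-- The characteristic polynomial of `c • (J - I)`, where `J` is the all-ones matrix. -/
theorem charpoly_smul_ones_sub_one [Nonempty ι] (c : R) :
    (Matrix.of fun i j : ι => if i = j then 0 else c).charpoly
      = (X + C c - C (Fintype.card ι * c)) * (X + C c) ^ (Fintype.card ι - 1) := by
  have hK : (Matrix.of fun i j : ι => if i = j then 0 else c)
      = Matrix.vecMulVec (fun _ => c) (fun _ => 1) - Matrix.scalar ι c := by
    ext i j
    by_cases hij : i = j <;> simp [Matrix.vecMulVec_apply, hij]
  obtain ⟨m, hm⟩ : ∃ m, Fintype.card ι = m + 1 :=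
    Nat.exists_eq_succ_of_ne_zero Fintype.card_ne_zero
  rw [hK, Matrix.charpoly_sub_scalar, Matrix.charpoly_vecMulVec]
  simp only [dotProduct, mul_one, sum_const, card_univ, nsmul_eq_mul, sub_comp, mul_comp,
    C_comp, X_pow_comp, hm, Nat.add_sub_cancel, smul_eq_C_mul]
  ring

end LinearAlgebra

theorem prE_stateEvent_and_add (μ : Finset (Fin n) → ℝ) (j : Fin n)
    (F : Finset (Fin n) → Prop) :
    prE μ (fun S => stateEvent j true S ∧ F S) + prE μ (fun S => stateEvent j false S ∧ F S)
      = prE μ F := by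
  simp only [prE, stateEvent, ← sum_add_distrib]
  refine sum_congr rfl fun S _ => ?_
  by_cases hj : j ∈ S <;> by_cases hF : F S <;> simp [hj, hF]

theorem condPrE_stateEvent_add (μ : Finset (Fin n) → ℝ) (j : Fin n)
    (F : Finset (Fin n) → Prop) (hF : prE μ F ≠ 0) :
    condPrE μ (stateEvent j true) F + condPrE μ (stateEvent j false) F = 1 := by
  rw [condPrE, condPrE, ← add_div, prE_stateEvent_and_add, div_self hF]

theorem prE_stateEvent_add (μ : Finset (Fin n) → ℝ) (hsum : ∑ S : Finset (Fin n), μ S = 1)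
    (j : Fin n) : prE μ (stateEvent j true) + prE μ (stateEvent j false) = 1 := by
  have h := prE_stateEvent_and_add μ j (fun _ => True)
  simpa [prE, hsum] using h

theorem prE_stateEvent_ne_zero (μ : Finset (Fin n) → ℝ)
    (hsum : ∑ S : Finset (Fin n), μ S = 1) (i : Fin n)
    (hmarg : 0 < prE μ (fun S => i ∈ S) ∧ prE μ (fun S => i ∈ S) < 1) (s : Bool) :
    prE μ (stateEvent i s) ≠ 0 := by
  have hin : prE μ (stateEvent i true) = prE μ (fun S => i ∈ S) :=
    congrArg (prE μ) (by ext S; simp [stateEvent])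
  have hadd := prE_stateEvent_add μ hsum i
  cases s
  · linarith [hmarg.2]
  · linarith [hmarg.1]

/-- The indicator matrix of the coordinate of a state. -/
def coordMatrix (n : ℕ) : Matrix (Fin n × Bool) (Fin n) ℝ :=
  fun p k => if p.1 = k then 1 else 0

/-- The matrix whose `k`-th row is the marginal distribution of the state of `k`. -/
def marginalMatrix (μ : Finset (Fin n) → ℝ) : Matrix (Fin n) (Fin n × Bool) ℝ :=
  fun k q => if q.1 = k then prE μ (stateEvent q.1 q.2) else 0

/-- The simple random walk on the complete graph on `Fin n`. -/
def completeWalk (n : ℕ) : Matrix (Fin n) (Fin n) ℝ :=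
  Matrix.of fun i j => if i = j then 0 else 1 / ((n : ℝ) - 1)

theorem marginalMatrix_mul_coordMatrix (μ : Finset (Fin n) → ℝ)
    (hsum : ∑ S : Finset (Fin n), μ S = 1) : marginalMatrix μ * coordMatrix n = 1 := by
  ext k l
  simp only [Matrix.mul_apply, marginalMatrix, coordMatrix, Fintype.sum_prod_type,
    Fintype.sum_bool, ← add_mul]
  rw [sum_eq_single k (by intro b _ hb; simp [hb]) (by simp)]
  by_cases hkl : k = l
  · subst hkl
    simp [prE_stateEvent_add μ hsum]
  · simp [hkl]

theorem centeredWalk_mul_coordMatrix (μ : Finset (Fin n) → ℝ)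
    (hsum : ∑ S : Finset (Fin n), μ S = 1)
    (hne : ∀ i s, prE μ (stateEvent i s) ≠ 0) : centeredWalk μ * coordMatrix n = 0 := by
  ext p k
  simp only [Matrix.mul_apply, centeredWalk, coordMatrix, Fintype.sum_prod_type,
    Fintype.sum_bool, ← add_mul]
  refine sum_eq_zero fun j _ => ?_
  have hcond := condPrE_stateEvent_add μ j _ (hne p.1 p.2)
  have hmarg := prE_stateEvent_add μ hsum j
  split_ifs
  · simp
  · simp
  · linear_combination (1 / ((n : ℝ) - 1)) * (hcond - hmarg)
  · simp

theorem skeletonWalk_eq_centeredWalk_add (μ : Finset (Fin n) → ℝ) :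
    skeletonWalk μ
      = centeredWalk μ + coordMatrix n * (completeWalk n * marginalMatrix μ) := by
  ext p q
  have hlift : (coordMatrix n * (completeWalk n * marginalMatrix μ)) p q
      = (completeWalk n * marginalMatrix μ) p.1 q := by
    rw [Matrix.mul_apply]
    simp [coordMatrix]
  rw [Matrix.add_apply, hlift, Matrix.mul_apply]
  simp only [skeletonWalk, centeredWalk, completeWalk, marginalMatrix, Matrix.of_apply,
    mul_ite, mul_zero, sum_ite_eq, mem_univ, if_true]
  split_ifs <;> ring

theorem charpoly_completeWalk (hn : 2 ≤ n) :
    (completeWalk n).charpoly = (X - 1) * (X + C (1 / ((n : ℝ) - 1))) ^ (n - 1) := by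
  have : Nonempty (Fin n) := ⟨⟨0, by omega⟩⟩
  have hn1 : (n : ℝ) - 1 ≠ 0 := by
    have : (2 : ℝ) ≤ n := by exact_mod_cast hn
    linarith
  have hc : (n : ℝ) * (1 / ((n : ℝ) - 1)) = 1 / ((n : ℝ) - 1) + 1 := by
    field_simp
    ring
  rw [completeWalk, charpoly_smul_ones_sub_one, Fintype.card_fin, hc, C_add, C_1]
  ring

theorem charpoly_skeletonWalk_mul_X_pow (hn : 2 ≤ n) (μ : Finset (Fin n) → ℝ)
    (hsum : ∑ S : Finset (Fin n), μ S = 1) (hne : ∀ i s, prE μ (stateEvent i s) ≠ 0) :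
    (skeletonWalk μ).charpoly * X ^ n
      = (centeredWalk μ).charpoly * (X - 1) * (X + C (1 / ((n : ℝ) - 1))) ^ (n - 1) := by
  have hzero : centeredWalk μ * (coordMatrix n * (completeWalk n * marginalMatrix μ)) = 0 := by
    rw [← Matrix.mul_assoc, centeredWalk_mul_coordMatrix μ hsum hne, Matrix.zero_mul]
  have hprod := charpoly_mul_charpoly_of_mul_eq_zero _ _ hzero
  have hswap := Matrix.charpoly_mul_comm' (coordMatrix n) (completeWalk n * marginalMatrix μ)
  rw [Matrix.mul_assoc, marginalMatrix_mul_coordMatrix μ hsum, Matrix.mul_one,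
    charpoly_completeWalk hn] at hswap
  rw [← skeletonWalk_eq_centeredWalk_add] at hprod
  simp only [Fintype.card_prod, Fintype.card_fin, Fintype.card_bool] at hprod hswap
  refine mul_left_cancel₀ (pow_ne_zero (n * 2) (X_ne_zero (R := ℝ))) ?_
  linear_combination (-X ^ n) * hprod + (centeredWalk μ).charpoly * hswap

theorem isRealEigenvalue_skeletonWalk_one (hn : 2 ≤ n) (μ : Finset (Fin n) → ℝ)
    (hne : ∀ i s, prE μ (stateEvent i s) ≠ 0) : IsRealEigenvalue (skeletonWalk μ) 1 := by
  have hn1 : (n : ℝ) - 1 ≠ 0 := by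
    have : (2 : ℝ) ≤ n := by exact_mod_cast hn
    linarith
  refine ⟨fun _ => 1, fun h => one_ne_zero (congrFun h (⟨0, by omega⟩, true)), ?_⟩
  ext p
  have hrow : ∀ j : Fin n, skeletonWalk μ p (j, true) + skeletonWalk μ p (j, false)
      = 1 / ((n : ℝ) - 1) - if p.1 = j then 1 / ((n : ℝ) - 1) else 0 := by
    intro j
    have hcond := condPrE_stateEvent_add μ j _ (hne p.1 p.2)
    simp only [skeletonWalk]
    split_ifs
    · ring
    · linear_combination (1 / ((n : ℝ) - 1)) * hcond
  simp only [Matrix.mulVec, dotProduct, mul_one, Fintype.sum_prod_type, Fintype.sum_bool, hrow,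
    sum_sub_distrib, sum_const, card_univ, Fintype.card_fin, nsmul_eq_mul, sum_ite_eq, mem_univ,
    if_true, Pi.smul_apply, smul_eq_mul]
  field_simp

theorem isCoprime_X_add_C_X {c : ℝ} (hc : c ≠ 0) : IsCoprime (X + C c) (X : ℝ[X]) := by
  refine ⟨C c⁻¹, -C c⁻¹, ?_⟩
  have h : C c⁻¹ * C c = (1 : ℝ[X]) := by rw [← C_mul, inv_mul_cancel₀ hc, C_1]
  linear_combination h

/-- `charpoly(P_∅) · X^n = charpoly(M_∅) · (X-1) · (X+1/(n-1))^(n-1)`;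
in particular `P_∅` has `1` as an eigenvalue and `-1/(n-1)` as an eigenvalue of
algebraic multiplicity at least `n-1`. -/
theorem statement7 (n : ℕ) (hn : 2 ≤ n) (μ : Finset (Fin n) → ℝ)
    (hpos : ∀ S, 0 ≤ μ S) (hsum : ∑ S : Finset (Fin n), μ S = 1)
    (hmarg : ∀ i : Fin n, 0 < prE μ (fun S => i ∈ S)
      ∧ prE μ (fun S => i ∈ S) < 1) :
    (skeletonWalk μ).charpoly * X ^ n
      = (centeredWalk μ).charpoly * (X - 1) * (X + C (1 / ((n : ℝ) - 1))) ^ (n - 1)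
    ∧ IsRealEigenvalue (skeletonWalk μ) 1
    ∧ (X + C (1 / ((n : ℝ) - 1))) ^ (n - 1) ∣ (skeletonWalk μ).charpoly := by
  have hne : ∀ i s, prE μ (stateEvent i s) ≠ 0 := fun i s =>
    prE_stateEvent_ne_zero μ hsum i (hmarg i) s
  have hchar := charpoly_skeletonWalk_mul_X_pow hn μ hsum hne
  have hc : 1 / ((n : ℝ) - 1) ≠ 0 := by
    have : (2 : ℝ) ≤ n := by exact_mod_cast hn
    exact one_div_ne_zero (by linarith)
  exact ⟨hchar, isRealEigenvalue_skeletonWalk_one hn μ hne,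
    ((isCoprime_X_add_C_X hc).pow (m := n - 1) (n := n)).dvd_of_dvd_mul_right
      (hchar ▸ dvd_mul_left _ _)⟩

end PaperStmt
end
end

section
/- For every m ≥ 1 and all real m×m matrices A and B, the characteristic polynomial of the 2m×2m block matrix with block rows [A, −A] and [B, −B] (i.e. Matrix.fromBlocks A (−A) B (−B)) equals X^m times the characteristic polynomial of A − B. -/
open Polynomial

/-- For all real `m × m` matrices `A`, `B`, the characteristic
polynomial of the block matrix `[[A, -A], [B, -B]]` equals `X^m` times the
characteristic polynomial of `A - B`. -/
theorem statement9 (m : ℕ) (hm : 1 ≤ m) (A B : Matrix (Fin m) (Fin m) ℝ) :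
    (Matrix.fromBlocks A (-A) B (-B)).charpoly = X ^ m * (A - B).charpoly := by
  have factor : Matrix.fromBlocks A (-A) B (-B) =
      Matrix.fromRows A B *
        Matrix.fromCols (1 : Matrix (Fin m) (Fin m) ℝ) (-1 : Matrix (Fin m) (Fin m) ℝ) := by
    simp
  rw [factor, Matrix.charpoly_mul_comm_of_le _ _ (by simp), Matrix.fromCols_mul_fromRows]
  simp [sub_eq_add_neg]
end
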